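/- All irreducible representatives of a given S-equivalence class of skew-symmetric augmented matrices have the same dimension: if (B' | A') and (B'' | A'') are irreducible and S-equivalent, then their dimensions are equal. -/

import Mathlib

/-- A skew-symmetric augmented matrix `(B ∣ A)` of dimension `n`:
`B` is an `n × n` integer matrix with `Bᵀ = -B` and `A` is an integer
column vector of length `n`.  Dimension `0` gives the empty matrix. -/
structure SkewAug where
  n : ℕ
  B : Matrix (Fin n) (Fin n) ℤ
  A : Fin n → ℤ
  skew : B.transpose = -B

namespace SkewAug

/-- The permutation matrix of a permutation `σ` of `Fin n`. -/
def permMatrixOf {n : ℕ} (σ : Equiv.Perm (Fin n)) : Matrix (Fin n) (Fin n) ℤ :=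
  Matrix.of fun i j => if σ j = i then 1 else 0

/-- `P` is a permutation matrix. -/
def IsPermMatrix {n : ℕ} (P : Matrix (Fin n) (Fin n) ℤ) : Prop :=
  ∃ σ : Equiv.Perm (Fin n), P = permMatrixOf σ

/-- `PermStep M N` : `N` is a permutation of `M`, i.e. there is a permutation
matrix `P` with `N = (P M.B Pᵀ ∣ P M.A)`. -/
def PermStep (M N : SkewAug) : Prop :=
  ∃ (h : M.n = N.n) (P : Matrix (Fin N.n) (Fin N.n) ℤ),
    IsPermMatrix P ∧
    N.B = P * (Matrix.reindex (finCongr h) (finCongr h) M.B) * P.transpose ∧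
    N.A = P.mulVec (fun i => M.A (Fin.cast h.symm i))

/-- `DeleteAt M S N` : `N` is obtained from `M` by deleting the rows and
columns of `M.B` indexed by `S` and the entries of `M.A` indexed by `S`. -/
def DeleteAt (M : SkewAug) (S : Set (Fin M.n)) (N : SkewAug) : Prop :=
  ∃ e : Fin N.n → Fin M.n, StrictMono e ∧ (∀ k, k ∈ Set.range e ↔ k ∉ S) ∧
    (∀ i j, N.B i j = M.B (e i) (e j)) ∧ (∀ i, N.A i = M.A (e i))

/-- The condition allowing a reduction of type 1 at index `j`:
`A j = 0` and the `j`-th column of `B` is the zero vector or equals `A`. -/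
def Red1Cond (M : SkewAug) (j : Fin M.n) : Prop :=
  M.A j = 0 ∧ ((∀ i, M.B i j = 0) ∨ (∀ i, M.B i j = M.A i))

/-- The condition allowing a reduction of type 2 at distinct indices `r, t`:
`A r = -A t` and the sum of the `r`-th and `t`-th columns of `B` equals `A`. -/
def Red2Cond (M : SkewAug) (r t : Fin M.n) : Prop :=
  r ≠ t ∧ M.A r = -M.A t ∧ ∀ i, M.B i r + M.B i t = M.A i

/-- `N` is obtained from `M` by a reduction of type 1. -/
def Red1 (M N : SkewAug) : Prop :=
  ∃ j : Fin M.n, Red1Cond M j ∧ DeleteAt M {j} N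

/-- `N` is obtained from `M` by a reduction of type 2. -/
def Red2 (M N : SkewAug) : Prop :=
  ∃ r t : Fin M.n, Red2Cond M r t ∧ DeleteAt M {r, t} N

/-- A single move: a permutation, a reduction of type 1 or 2, or an
extension of type 1 or 2 (the inverse of a reduction). -/
def Move (M N : SkewAug) : Prop :=
  PermStep M N ∨ Red1 M N ∨ Red2 M N ∨ Red1 N M ∨ Red2 N M

/-- S-equivalence: `M` can be transformed into `N` by a finite sequence of
moves. -/
def SEquiv : SkewAug → SkewAug → Prop :=
  Relation.ReflTransGen Move

/-- A reduction of type 1 or type 2 can be applied to `M`. -/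
def Reducible (M : SkewAug) : Prop :=
  (∃ j, Red1Cond M j) ∨ (∃ r t, Red2Cond M r t)

/-- `M` is irreducible: no reduction of type 1 or type 2 can be applied. -/
def Irreducible (M : SkewAug) : Prop := ¬ Reducible M

/-- The empty skew-symmetric augmented matrix. -/
def empty : SkewAug := ⟨0, 0, 0, by simp⟩

/-- `M` is trivial if it is S-equivalent to the empty matrix. -/
def Trivial (M : SkewAug) : Prop := SEquiv M empty

end SkewAug

namespace SkewAug

/-- `e` embeds `N` in `M` as a (possibly permuted) sub-augmented-matrix. -/
def Emb (N M : SkewAug) (e : Fin N.n → Fin M.n) : Prop :=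
  Function.Injective e ∧ (∀ i j, N.B i j = M.B (e i) (e j)) ∧ ∀ i, N.A i = M.A (e i)

/-- `S` is a set of indices that may be deleted by one reduction. -/
def IsRed (M : SkewAug) (S : Set (Fin M.n)) : Prop :=
  (∃ j, Red1Cond M j ∧ S = {j}) ∨ (∃ r t, Red2Cond M r t ∧ S = {r, t})

/-- One reduction, up to permutation of the result. -/
def Red (M N : SkewAug) : Prop :=
  ∃ e, Emb N M e ∧ IsRed M (Set.range e)ᶜ

/-- Isomorphism. -/
def Iso (M N : SkewAug) : Prop := ∃ e, Emb M N e ∧ Function.Surjective e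

lemma skew_apply (M : SkewAug) (i j : Fin M.n) : M.B i j = - M.B j i := by
  have := congrFun (congrFun M.skew j) i
  simpa using this

lemma Red2Cond.symm {M : SkewAug} {r t : Fin M.n} (h : Red2Cond M r t) : Red2Cond M t r := by
  obtain ⟨h1, h2, h3⟩ := h
  exact ⟨h1.symm, by omega, fun i => by rw [add_comm]; exact h3 i⟩

lemma Emb.comp {K N M : SkewAug} {f : Fin K.n → Fin N.n} {e : Fin N.n → Fin M.n}
    (he : Emb N M e) (hf : Emb K N f) : Emb K M (e ∘ f) :=
  ⟨he.1.comp hf.1, fun i j => by simp [hf.2.1, he.2.1], fun i => by simp [hf.2.2, he.2.2]⟩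

lemma Emb.factor {K N M : SkewAug} {f : Fin K.n → Fin M.n} {e : Fin N.n → Fin M.n}
    (he : Emb N M e) (hf : Emb K M f) (h : Set.range f ⊆ Set.range e) :
    ∃ g, Emb K N g ∧ ∀ i, e (g i) = f i := by
  choose g hg using fun i => h (Set.mem_range_self i)
  refine ⟨g, ⟨fun a b hab => hf.1 ?_, fun i j => ?_, fun i => ?_⟩, hg⟩
  · rw [← hg, ← hg, hab]
  · rw [he.2.1, hg, hg, hf.2.1]
  · rw [he.2.2, hg, hf.2.2]

lemma Iso.symm {M N : SkewAug} (h : Iso M N) : Iso N M := by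
  obtain ⟨e, he, hs⟩ := h
  have hid : Emb N N id := ⟨Function.injective_id, fun _ _ => rfl, fun _ => rfl⟩
  obtain ⟨g, hg, h⟩ := he.factor hid (by rw [hs.range_eq]; exact Set.subset_univ _)
  exact ⟨g, hg, fun i => ⟨e i, he.1 (h _)⟩⟩

lemma Emb.iso_of_range {N K M : SkewAug} {f : Fin K.n → Fin M.n} {e : Fin N.n → Fin M.n}
    (he : Emb N M e) (hf : Emb K M f) (h : Set.range f = Set.range e) : Iso K N := by
  obtain ⟨g, hg, hh⟩ := he.factor hf h.subset
  refine ⟨g, hg, fun i => ?_⟩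
  obtain ⟨k, hk⟩ : e i ∈ Set.range f := h ▸ Set.mem_range_self i
  exact ⟨k, he.1 (by rw [hh, hk])⟩

lemma Emb.pull {N M : SkewAug} {e : Fin N.n → Fin M.n} (he : Emb N M e)
    {T : Set (Fin M.n)} (hT : IsRed M T) (hs : T ⊆ Set.range e) : IsRed N (e ⁻¹' T) := by
  obtain ⟨hi, hB, hA⟩ := he
  rcases hT with ⟨j, ⟨h1, h2⟩, rfl⟩ | ⟨r, t, ⟨h1, h2, h3⟩, rfl⟩
  · obtain ⟨j, rfl⟩ := hs rfl
    refine Or.inl ⟨j, ⟨by rw [hA, h1], ?_⟩, ?_⟩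
    · rcases h2 with h | h
      · exact Or.inl fun i => by rw [hB, h]
      · exact Or.inr fun i => by rw [hB, h, hA]
    · ext k; simp [hi.eq_iff]
  · obtain ⟨r, rfl⟩ := hs (Or.inl rfl)
    obtain ⟨t, rfl⟩ := hs (Or.inr rfl)
    refine Or.inr ⟨r, t, ⟨fun h => h1 (h ▸ rfl), by rw [hA, hA, h2], fun i => ?_⟩, ?_⟩
    · rw [hB, hB, hA, h3]
    · ext k; simp [hi.eq_iff]

lemma Emb.red {N K M : SkewAug} {f : Fin K.n → Fin M.n} {e : Fin N.n → Fin M.n}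
    (he : Emb N M e) (hf : Emb K M f) {T : Set (Fin M.n)} (hT : IsRed M T)
    (hs : T ⊆ Set.range e) (hr : Set.range f = Set.range e \ T) : Red N K := by
  obtain ⟨g, hg, hh⟩ := he.factor hf (hr ▸ Set.sdiff_subset)
  refine ⟨g, hg, ?_⟩
  convert he.pull hT hs using 1
  ext k
  have : k ∈ Set.range g ↔ e k ∈ Set.range f := by
    constructor
    · rintro ⟨i, rfl⟩; exact ⟨i, (hh i).symm⟩
    · rintro ⟨i, hi⟩; exact ⟨i, he.1 (by rw [hh, hi])⟩
  rw [Set.mem_compl_iff, this, hr]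
  simp

/-- Restriction to a complement. -/
lemma exists_restrict (M : SkewAug) (S : Set (Fin M.n)) :
    ∃ K f, Emb K M f ∧ Set.range f = S := by
  classical
  let c := Fintype.equivFin S
  refine ⟨⟨Fintype.card S, fun i j => M.B (c.symm i) (c.symm j), fun i => M.A (c.symm i), ?_⟩,
    fun i => (c.symm i : Fin M.n), ⟨?_, fun _ _ => rfl, fun _ => rfl⟩, ?_⟩
  · ext i j
    exact M.skew_apply _ _
  · exact Subtype.val_injective.comp c.symm.injective
  · have := c.symm.surjective.range_comp (Subtype.val : S → Fin M.n)
    simpa [Function.comp_def] using this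

lemma IsRed.nonempty {M : SkewAug} {S : Set (Fin M.n)} (h : IsRed M S) : S.Nonempty := by
  rcases h with ⟨j, _, rfl⟩ | ⟨r, t, _, rfl⟩
  · exact ⟨j, rfl⟩
  · exact ⟨r, Or.inl rfl⟩

lemma Red.lt {M N : SkewAug} (h : Red M N) : N.n < M.n := by
  obtain ⟨e, he, hr⟩ := h
  obtain ⟨x, hx⟩ := hr.nonempty
  simpa using Fintype.card_lt_of_injective_of_notMem e he.1 hx

lemma Red.reducible {M N : SkewAug} (h : Red M N) : Reducible M := by
  obtain ⟨e, he, hr⟩ := h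
  rcases hr with ⟨j, h, _⟩ | ⟨r, t, h, _⟩
  · exact Or.inl ⟨j, h⟩
  · exact Or.inr ⟨r, t, h⟩

lemma Reducible.exists_red {M : SkewAug} (h : Reducible M) : ∃ N, Red M N := by
  have : ∃ S, IsRed M S := by
    rcases h with ⟨j, h⟩ | ⟨r, t, h⟩
    · exact ⟨_, Or.inl ⟨j, h, rfl⟩⟩
    · exact ⟨_, Or.inr ⟨r, t, h, rfl⟩⟩
  obtain ⟨S, hS⟩ := this
  obtain ⟨K, f, hf, hr⟩ := M.exists_restrict Sᶜ
  exact ⟨K, f, hf, by rwa [hr, compl_compl]⟩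

lemma Iso.red {M N K : SkewAug} (h : Iso M N) (hr : Red M K) : Red N K := by
  obtain ⟨e, he, hs⟩ := h.symm
  obtain ⟨f, hf, hT⟩ := hr
  exact he.red hf hT (by simp [hs.range_eq]) (by simp [hs.range_eq])

lemma Iso.reducible {M N : SkewAug} (h : Iso M N) (hr : Reducible M) : Reducible N := by
  obtain ⟨K, hK⟩ := hr.exists_red
  exact (h.red hK).reducible

lemma Iso.dim {M N : SkewAug} (h : Iso M N) : M.n = N.n := by
  obtain ⟨e, he, hs⟩ := h
  simpa using Fintype.card_of_bijective ⟨he.1, hs⟩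

lemma Red1Cond.other {M : SkewAug} {r t : Fin M.n} (h1 : Red1Cond M r) (h2 : Red2Cond M r t) :
    Red1Cond M t := by
  obtain ⟨a, b⟩ := h1
  obtain ⟨_, c, d⟩ := h2
  refine ⟨by omega, ?_⟩
  rcases b with b | b
  · exact Or.inr fun i => by have := b i; have := d i; omega
  · exact Or.inl fun i => by have := b i; have := d i; omega

lemma iso_swap {M N1 N2 : SkewAug} {r t u : Fin M.n} (h1 : Red2Cond M r t) (h2 : Red2Cond M r u)
    {e1 : Fin N1.n → Fin M.n} {e2 : Fin N2.n → Fin M.n} (he1 : Emb N1 M e1) (he2 : Emb N2 M e2)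
    (hr1 : (Set.range e1)ᶜ = {r, t}) (hr2 : (Set.range e2)ᶜ = {r, u}) : Iso N1 N2 := by
  obtain ⟨a1, a2, a3⟩ := h1
  obtain ⟨b1, b2, b3⟩ := h2
  have hA : M.A t = M.A u := by omega
  have hc : ∀ i, M.B i t = M.B i u := fun i => by have := a3 i; have := b3 i; omega
  have hd : ∀ i, M.B t i = M.B u i := fun i => by
    rw [M.skew_apply t, M.skew_apply u, hc]
  have hsw : Emb M M (Equiv.swap t u) := by
    have hc' : ∀ i j, M.B i (Equiv.swap t u j) = M.B i j := fun i j => by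
      rw [Equiv.swap_apply_def]; split_ifs with h h <;> simp [h, hc]
    have hd' : ∀ i j, M.B (Equiv.swap t u i) j = M.B i j := fun i j => by
      rw [Equiv.swap_apply_def]; split_ifs with h h <;> simp [h, hd]
    refine ⟨(Equiv.swap t u).injective, fun i j => by rw [hc', hd'], fun i => ?_⟩
    rw [Equiv.swap_apply_def]; split_ifs with h h <;> simp [h, hA]
  refine he2.iso_of_range (hsw.comp he1) ?_
  rw [Set.range_comp, ← compl_inj_iff, hr2, ← Set.image_compl_eq (Equiv.swap t u).bijective, hr1,
    Set.image_pair, Equiv.swap_apply_left, Equiv.swap_apply_of_ne_of_ne a1 b1]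

lemma confl {M N1 N2 : SkewAug} (h1 : Red M N1) (h2 : Red M N2) :
    Iso N1 N2 ∨ Red N1 N2 ∨ Red N2 N1 ∨ ∃ K, Red N1 K ∧ Red N2 K := by
  obtain ⟨e1, he1, hT1⟩ := h1
  obtain ⟨e2, he2, hT2⟩ := h2
  by_cases hd : Disjoint (Set.range e1)ᶜ (Set.range e2)ᶜ
  · right; right; right
    obtain ⟨K, f, hf, hr⟩ := M.exists_restrict (Set.range e1 ∩ Set.range e2)
    refine ⟨K, he1.red hf hT2 ?_ ?_, he2.red hf hT1 ?_ ?_⟩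
    · intro x hx; by_contra h'; exact Set.disjoint_left.1 hd h' hx
    · rw [hr, Set.sdiff_compl]
    · intro x hx; by_contra h'; exact Set.disjoint_left.1 hd hx h'
    · rw [hr, Set.sdiff_compl, Set.inter_comm]
  have key : ∀ {P Q : SkewAug} {f : Fin P.n → Fin M.n} {g : Fin Q.n → Fin M.n} {r t : Fin M.n},
      Emb P M f → Emb Q M g → Red1Cond M r → Red2Cond M r t → (Set.range f)ᶜ = {r} →
      (Set.range g)ᶜ = {r, t} → Red P Q := by
    intro P Q f g r t hf hg c1 c2 hr1 hr2
    have hr1' : Set.range f = {r}ᶜ := by rw [← hr1, compl_compl]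
    have hr2' : Set.range g = {r, t}ᶜ := by rw [← hr2, compl_compl]
    refine hf.red hg (T := {t}) (Or.inl ⟨t, c1.other c2, rfl⟩) ?_ ?_
    · rw [hr1']; simpa using c2.1
    · rw [hr1', hr2']; ext k; simp
  rw [Set.not_disjoint_iff] at hd
  obtain ⟨x, hx1, hx2⟩ := hd
  have norm : ∀ {S : Set (Fin M.n)}, IsRed M S → x ∈ S →
      (Red1Cond M x ∧ S = {x}) ∨ ∃ t, Red2Cond M x t ∧ S = {x, t} := by
    rintro S (⟨j, h, rfl⟩ | ⟨r, t, h, rfl⟩) hx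
    · obtain rfl : x = j := hx
      exact Or.inl ⟨h, rfl⟩
    · rcases hx with rfl | hx
      · exact Or.inr ⟨t, h, rfl⟩
      · obtain rfl : x = t := hx
        exact Or.inr ⟨r, h.symm, Set.pair_comm _ _⟩
  rcases norm hT1 hx1 with ⟨c1, s1⟩ | ⟨t, c1, s1⟩ <;> rcases norm hT2 hx2 with ⟨c2, s2⟩ | ⟨u, c2, s2⟩
  · exact Or.inl (he2.iso_of_range he1 (compl_injective (s1.trans s2.symm)))
  · exact Or.inr (Or.inl (key he1 he2 c1 c2 s1 s2))
  · exact Or.inr (Or.inr (Or.inl (key he2 he1 c2 c1 s2 s1)))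
  · exact Or.inl (iso_swap c1 c2 he1 he2 s1 s2)

/-- `M` reduces to an irreducible matrix of dimension `k`. -/
inductive Nf : SkewAug → ℕ → Prop
  | irr (M : SkewAug) (h : Irreducible M) : Nf M M.n
  | step (M N : SkewAug) (k : ℕ) (h : Red M N) (hk : Nf N k) : Nf M k

lemma Nf.exists' (d : ℕ) : ∀ M : SkewAug, M.n = d → ∃ k, Nf M k := by
  induction d using Nat.strong_induction_on with
  | _ d ih =>
    intro M hM
    by_cases h : Reducible M
    · obtain ⟨N, hN⟩ := h.exists_red
      obtain ⟨k, hk⟩ := ih N.n (hM ▸ hN.lt) N rfl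
      exact ⟨k, .step M N k hN hk⟩
    · exact ⟨_, .irr M h⟩

lemma Nf.iso {M N : SkewAug} {k : ℕ} (h : Iso M N) (hk : Nf M k) : Nf N k := by
  cases hk with
  | irr _ hi => rw [h.dim]; exact .irr N fun hr => hi (h.symm.reducible hr)
  | step _ K _ hr hk => exact .step N K k (h.red hr) hk

lemma Nf.unique' (d : ℕ) : ∀ M : SkewAug, M.n = d → ∀ k l, Nf M k → Nf M l → k = l := by
  induction d using Nat.strong_induction_on with
  | _ d ih =>
    intro M hM k l hk hl
    cases hk with
    | irr _ hi =>
      cases hl with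
      | irr => rfl
      | step _ N _ hr _ => exact absurd hr.reducible hi
    | step _ N1 _ hr1 hk1 =>
      cases hl with
      | irr _ hi => exact absurd hr1.reducible hi
      | step _ N2 _ hr2 hk2 =>
        have i1 := ih N1.n (hM ▸ hr1.lt) N1 rfl
        have i2 := ih N2.n (hM ▸ hr2.lt) N2 rfl
        rcases confl hr1 hr2 with h | h | h | ⟨K, h1, h2⟩
        · exact i2 _ _ (hk1.iso h) hk2
        · exact i1 _ _ hk1 (.step _ _ _ h hk2)
        · exact i2 _ _ (.step _ _ _ h hk1) hk2
        · obtain ⟨m, hm⟩ := Nf.exists' _ K rfl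
          exact (i1 _ _ hk1 (.step _ _ _ h1 hm)).trans (i2 _ _ (.step _ _ _ h2 hm) hk2)

lemma Nf.red {M N : SkewAug} {k : ℕ} (h : Red M N) (hk : Nf M k) : Nf N k := by
  obtain ⟨m, hm⟩ := Nf.exists' _ N rfl
  rwa [Nf.unique' _ M rfl k m hk (.step _ _ _ h hm)]

lemma DeleteAt.emb {M N : SkewAug} {S : Set (Fin M.n)} (h : DeleteAt M S N) (hS : IsRed M S) :
    Red M N := by
  obtain ⟨e, h1, h2, h3, h4⟩ := h
  refine ⟨e, ⟨h1.injective, h3, h4⟩, ?_⟩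
  convert hS using 1
  ext k
  rw [Set.mem_compl_iff, h2, not_not]

lemma Red1.red {M N : SkewAug} (h : Red1 M N) : Red M N := by
  obtain ⟨j, h, hd⟩ := h
  exact hd.emb (Or.inl ⟨j, h, rfl⟩)

lemma Red2.red {M N : SkewAug} (h : Red2 M N) : Red M N := by
  obtain ⟨r, t, h, hd⟩ := h
  exact hd.emb (Or.inr ⟨r, t, h, rfl⟩)

lemma PermStep.iso {M N : SkewAug} (h : PermStep M N) : Iso M N := by
  obtain ⟨n, B, A, hs⟩ := M
  obtain ⟨n', B', A', hs'⟩ := N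
  obtain ⟨h, P, ⟨σ, rfl⟩, hB, hA⟩ := h
  dsimp only at h
  subst h
  refine ⟨σ, ⟨σ.injective, fun i j => ?_, fun i => ?_⟩, σ.surjective⟩
  · simp only at hB
    simp [hB, permMatrixOf, Matrix.mul_apply, Matrix.reindex_apply]
  · simp only at hA
    simp [hA, permMatrixOf, Matrix.mulVec, dotProduct]

lemma Nf.move {M N : SkewAug} {k : ℕ} (h : Move M N) (hk : Nf M k) : Nf N k := by
  rcases h with h | h | h | h | h
  · exact hk.iso h.iso
  · exact hk.red h.red
  · exact hk.red h.red
  · exact .step _ _ _ h.red hk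
  · exact .step _ _ _ h.red hk

lemma Nf.sEquiv {M N : SkewAug} {k : ℕ} (h : SEquiv M N) (hk : Nf M k) : Nf N k := by
  induction h with
  | refl => exact hk
  | tail _ h ih => exact ih.move h

end SkewAug

/-- All irreducible representatives of a given S-equivalence
class of skew-symmetric augmented matrices have the same dimension. -/
theorem irreducible_sEquiv_dim_eq (M N : SkewAug)
    (hM : SkewAug.Irreducible M) (hN : SkewAug.Irreducible N)
    (h : SkewAug.SEquiv M N) :
    M.n = N.n :=
  SkewAug.Nf.unique' _ N rfl _ _ ((SkewAug.Nf.irr M hM).sEquiv h) (.irr N hN)
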